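/- arXiv:2303.12632 — 2 statements merged into one kernel-verified Lean document; each statement's English description precedes it below -/
import Mathlib

section
/- Let Δ be a positive integer and let G be a finite simple graph with n vertices, m edges, and maximum degree at most Δ. Let x ≥ 0 and y be real numbers and let z_1, ..., z_Δ be nonnegative real numbers such that z_i + z_j ≥ j − i for all integers 1 ≤ i < j ≤ Δ and x + i·y ≥ i·z_i for all integers 1 ≤ i ≤ Δ. Then irr(G) ≤ n·x + 2m·y. -/
open Finset SimpleGraph

/-- The irregularity of a graph: `irr G = ∑_{uv ∈ E(G)} |d_G(u) - d_G(v)|`. -/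
def irr {V : Type*} [Fintype V] (G : SimpleGraph V) [DecidableRel G.Adj] : ℤ :=
  ∑ e ∈ G.edgeFinset, Sym2.lift ⟨fun u v => |(G.degree u : ℤ) - (G.degree v : ℤ)|,
    fun u v => by simp [abs_sub_comm]⟩ e

/-!
Sum `z (d v)` over the two ends `v` of each edge. The constraints `j - i ≤ z i + z j` bound the
irregularity by this sum edge by edge. Counted by vertices, the sum is `∑ v, d v * z (d v)`, which
the constraints `i * z i ≤ x + i * y` bound by `∑ v, (x + d v * y)`; the handshaking lemma
evaluates the latter.
-/

section DualProgram

variable {R : Type*} [Ring R] [LinearOrder R]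

/-- Feasibility of `(x, y, z 1, ..., z Δ)` for the dual linear program (D) that bounds the
irregularity of graphs of maximum degree at most `Δ`. Only the values of `z` at `1, ..., Δ` are
constrained. -/
structure IsDualFeasible (Δ : ℕ) (x y : R) (z : ℕ → R) : Prop where
  nonneg : 0 ≤ x
  weight_nonneg : ∀ i, 1 ≤ i → i ≤ Δ → 0 ≤ z i
  sub_le_add : ∀ i j : ℕ, 1 ≤ i → i < j → j ≤ Δ → (j : R) - i ≤ z i + z j
  mul_le : ∀ i : ℕ, 1 ≤ i → i ≤ Δ → i * z i ≤ x + i * y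

namespace IsDualFeasible

variable {Δ i j : ℕ} {x y : R} {z : ℕ → R}

theorem abs_sub_le_add [IsOrderedRing R] (h : IsDualFeasible Δ x y z) (hi : 1 ≤ i) (hiΔ : i ≤ Δ)
    (hj : 1 ≤ j) (hjΔ : j ≤ Δ) : |(i : R) - j| ≤ z i + z j := by
  wlog hij : i ≤ j generalizing i j
  · rw [abs_sub_comm, add_comm]
    exact this hj hjΔ hi hiΔ (le_of_not_ge hij)
  obtain rfl | hlt := hij.eq_or_lt
  · simpa only [sub_self, abs_zero] using
      add_nonneg (h.weight_nonneg i hi hiΔ) (h.weight_nonneg i hi hiΔ)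
  · rw [abs_sub_comm, abs_of_nonneg (sub_nonneg.2 (Nat.mono_cast hij))]
    exact h.sub_le_add i j hi hlt hjΔ

theorem mul_le_of_le (h : IsDualFeasible Δ x y z) (hi : i ≤ Δ) : i * z i ≤ x + i * y := by
  obtain rfl | hpos := i.eq_zero_or_pos
  · simpa only [Nat.cast_zero, zero_mul, add_zero] using h.nonneg
  · exact h.mul_le i hpos hi

end IsDualFeasible

end DualProgram

section DegreeSums

variable {V : Type*} [Fintype V] (G : SimpleGraph V) [DecidableRel G.Adj]

theorem sum_edgeFinset_sum_toFinset [DecidableEq V] {M : Type*} [AddCommMonoid M] (f : V → M) :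
    ∑ e ∈ G.edgeFinset, ∑ v ∈ e.toFinset, f v = ∑ v, G.degree v • f v := by
  calc ∑ e ∈ G.edgeFinset, ∑ v ∈ e.toFinset, f v
      = ∑ v, ∑ _e ∈ G.incidenceFinset v, f v :=
        Finset.sum_comm' fun e v => by simp [incidenceFinset_eq_filter]
    _ = ∑ v, G.degree v • f v := by
        simp only [Finset.sum_const, card_incidenceFinset_eq_degree]

theorem sum_add_degree_mul {R : Type*} [Semiring R] (x y : R) :
    ∑ v, (x + G.degree v * y) = Fintype.card V * x + 2 * #G.edgeFinset * y := by
  rw [Finset.sum_add_distrib, Finset.sum_const, Finset.card_univ, nsmul_eq_mul, ← Finset.sum_mul,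
    ← Nat.cast_sum, G.sum_degrees_eq_twice_card_edges, Nat.cast_mul, Nat.cast_ofNat]

variable {G} {R : Type*} [Ring R] [LinearOrder R] [IsStrictOrderedRing R]

theorem irr_le_sum_degree_mul {f : V → R}
    (hf : ∀ u v, G.Adj u v → |(G.degree u : R) - G.degree v| ≤ f u + f v) :
    (irr G : R) ≤ ∑ v, G.degree v * f v := by
  classical
  simp only [← nsmul_eq_mul, ← sum_edgeFinset_sum_toFinset]
  rw [irr, Int.cast_sum]
  refine Finset.sum_le_sum fun e he => ?_
  induction e with
  | _ u v =>
    have huv : G.Adj u v := mem_edgeFinset.1 he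
    rw [Sym2.toFinset_mk_eq, Finset.sum_pair huv.ne]
    simpa only [Sym2.lift_mk, Int.cast_abs, Int.cast_sub, Int.cast_natCast] using hf u v huv

theorem stmt_6_general {Δ : ℕ} (hmax : ∀ v, G.degree v ≤ Δ) {x y : R} {z : ℕ → R}
    (h : IsDualFeasible Δ x y z) :
    (irr G : R) ≤ Fintype.card V * x + 2 * #G.edgeFinset * y := by
  have hpos {u v : V} (huv : G.Adj u v) : 1 ≤ G.degree u :=
    (G.degree_pos_iff_exists_adj u).2 ⟨v, huv⟩
  calc (irr G : R)
      ≤ ∑ v, G.degree v * z (G.degree v) :=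
        irr_le_sum_degree_mul fun u v huv =>
          h.abs_sub_le_add (hpos huv) (hmax u) (hpos huv.symm) (hmax v)
    _ ≤ ∑ v, (x + G.degree v * y) := Finset.sum_le_sum fun v _ => h.mul_le_of_le (hmax v)
    _ = Fintype.card V * x + 2 * #G.edgeFinset * y := sum_add_degree_mul G x y

end DegreeSums

theorem stmt_6 {V : Type*} [Fintype V] (G : SimpleGraph V) [DecidableRel G.Adj]
    (Δ : ℕ) (hΔ : 0 < Δ)
    (hmax : ∀ v : V, G.degree v ≤ Δ)
    (x y : ℝ) (z : ℕ → ℝ)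
    (hx : 0 ≤ x)
    (hz : ∀ i : ℕ, 1 ≤ i → i ≤ Δ → 0 ≤ z i)
    (hzz : ∀ i j : ℕ, 1 ≤ i → i < j → j ≤ Δ → z i + z j ≥ (j : ℝ) - i)
    (hxy : ∀ i : ℕ, 1 ≤ i → i ≤ Δ → x + (i : ℝ) * y ≥ (i : ℝ) * z i) :
    (irr G : ℝ) ≤ (Fintype.card V : ℝ) * x + 2 * (G.edgeFinset.card : ℝ) * y :=
  stmt_6_general hmax ⟨hx, hz, hzz, hxy⟩
end

section
/- Let Δ > δ ≥ 1 be integers. The complete bipartite graph K_{Δ,δ}, which has n = Δ+δ vertices, m = Δδ edges, maximum degree Δ, and minimum degree δ, satisfies δ ≤ 2m/n ≤ 2Δδ/(Δ+δ) and irr(K_{Δ,δ}) = 2Δm − δΔn, i.e., the bound of Proposition 2 holds with equality for K_{Δ,δ}. -/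
open Finset SimpleGraph

instance {α β : Type*} : DecidableRel (completeBipartiteGraph α β).Adj := fun v w => by
  simp only [completeBipartiteGraph]; infer_instance

section completeBipartiteGraph

variable {α β : Type*}

@[simp]
theorem degree_completeBipartiteGraph_inl [Fintype β] (a : α)
    [Fintype ((completeBipartiteGraph α β).neighborSet (Sum.inl a))] :
    (completeBipartiteGraph α β).degree (Sum.inl a) = Fintype.card β := by
  have neighbors : (completeBipartiteGraph α β).neighborFinset (Sum.inl a) =
      univ.map Function.Embedding.inr := by
    ext v
    cases v <;> simp
  rw [← card_neighborFinset_eq_degree, neighbors, card_map, card_univ]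

@[simp]
theorem degree_completeBipartiteGraph_inr [Fintype α] (b : β)
    [Fintype ((completeBipartiteGraph α β).neighborSet (Sum.inr b))] :
    (completeBipartiteGraph α β).degree (Sum.inr b) = Fintype.card α := by
  have neighbors : (completeBipartiteGraph α β).neighborFinset (Sum.inr b) =
      univ.map Function.Embedding.inl := by
    ext v
    cases v <;> simp
  rw [← card_neighborFinset_eq_degree, neighbors, card_map, card_univ]

theorem card_edgeFinset_completeBipartiteGraph [Fintype α] [Fintype β]
    [Fintype (completeBipartiteGraph α β).edgeSet] :
    #(completeBipartiteGraph α β).edgeFinset = Fintype.card α * Fintype.card β := by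
  have h := encard_edgeSet_completeBipartiteGraph (W₁ := α) (W₂ := β)
  rw [← coe_edgeFinset, Set.encard_coe_eq_coe_finsetCard, ENat.card_eq_coe_fintype_card,
    ENat.card_eq_coe_fintype_card] at h
  exact_mod_cast h

theorem abs_degree_sub_degree_completeBipartiteGraph_of_adj [Fintype α] [Fintype β]
    {u v : α ⊕ β} (huv : (completeBipartiteGraph α β).Adj u v) :
    |((completeBipartiteGraph α β).degree u : ℤ) - (completeBipartiteGraph α β).degree v| =
      |(Fintype.card α : ℤ) - Fintype.card β| := by
  rcases u with a | b <;> rcases v with a' | b'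
  · simp at huv
  · simp [abs_sub_comm]
  · simp
  · simp at huv

end completeBipartiteGraph

theorem irr_eq_card_edgeFinset_mul {V : Type*} [Fintype V] {G : SimpleGraph V}
    [DecidableRel G.Adj] {c : ℤ}
    (hc : ∀ u v, G.Adj u v → |(G.degree u : ℤ) - G.degree v| = c) :
    irr G = #G.edgeFinset * c := by
  rw [irr, ← nsmul_eq_mul]
  refine sum_eq_card_nsmul fun e he => ?_
  induction e using Sym2.ind with
  | _ u v => exact hc u v (mem_edgeFinset.mp he)

theorem irr_completeBipartiteGraph (α β : Type*) [Fintype α] [Fintype β] :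
    irr (completeBipartiteGraph α β) =
      Fintype.card α * Fintype.card β * |(Fintype.card α : ℤ) - Fintype.card β| := by
  rw [irr_eq_card_edgeFinset_mul fun _ _ => abs_degree_sub_degree_completeBipartiteGraph_of_adj,
    card_edgeFinset_completeBipartiteGraph, Nat.cast_mul]

theorem le_two_mul_mul_div_add {K : Type*} [Field K] [LinearOrder K] [IsStrictOrderedRing K]
    {a b : K} (hb : 0 < b) (hba : b ≤ a) : b ≤ 2 * (a * b) / (a + b) := by
  rw [le_div_iff₀ (add_pos (hb.trans_le hba) hb)]
  calc b * (a + b) ≤ b * (a + a) := by gcongr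
    _ = 2 * (a * b) := by ring

theorem stmt_14 (Δ δ : ℕ) (hδ : 1 ≤ δ) (hδΔ : δ < Δ)
    (n m : ℕ) (hn : n = Δ + δ) (hm : m = Δ * δ) :
    Fintype.card (Fin Δ ⊕ Fin δ) = n ∧
    (completeBipartiteGraph (Fin Δ) (Fin δ)).edgeFinset.card = m ∧
    (∀ v, (completeBipartiteGraph (Fin Δ) (Fin δ)).degree v ≤ Δ) ∧
    (∃ v, (completeBipartiteGraph (Fin Δ) (Fin δ)).degree v = Δ) ∧
    (∀ v, δ ≤ (completeBipartiteGraph (Fin Δ) (Fin δ)).degree v) ∧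
    (∃ v, (completeBipartiteGraph (Fin Δ) (Fin δ)).degree v = δ) ∧
    (δ : ℝ) ≤ 2 * (m : ℝ) / n ∧
    2 * (m : ℝ) / n ≤ 2 * (Δ : ℝ) * δ / ((Δ : ℝ) + δ) ∧
    (irr (completeBipartiteGraph (Fin Δ) (Fin δ)) : ℝ) =
      2 * (Δ : ℝ) * m - (δ : ℝ) * Δ * n := by
  subst hn hm
  have hle : δ ≤ Δ := hδΔ.le
  refine ⟨by simp, by simp [card_edgeFinset_completeBipartiteGraph],
    fun v => by cases v <;> simp [hle], ⟨Sum.inr ⟨0, hδ⟩, by simp⟩,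
    fun v => by cases v <;> simp [hle], ⟨Sum.inl ⟨0, hδ.trans hle⟩, by simp⟩, ?_, ?_, ?_⟩
  · push_cast
    exact le_two_mul_mul_div_add (by exact_mod_cast hδ) (by exact_mod_cast hle)
  · push_cast
    rw [mul_assoc]
  · have hsub : (0 : ℤ) ≤ Δ - δ := sub_nonneg.mpr (by exact_mod_cast hle)
    rw [irr_completeBipartiteGraph, Fintype.card_fin, Fintype.card_fin, abs_of_nonneg hsub]
    push_cast
    ring
end
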